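/- Suppose α < ω₁, K ≥ 1, X ⊆ W is a block subspace and (z_n) ⊆ W is a block sequence such that player II has a strategy in G^α_X to play outcomes (y_0,…,y_k) satisfying (y_0,…,y_k) ∼_K (z_0,…,z_k). Then for every block subspace Y ⊆ X, rank(T((z_n),Y,K)) > α. -/

import Mathlib

open Filter Topology

namespace Rosendal

variable {𝒲 : Type} [NormedAddCommGroup 𝒲] [NormedSpace ℝ 𝒲]

/-- `(e n)` is a Schauder basis of the Banach space `𝒲`. -/
def IsSchauderBasis (e : ℕ → 𝒲) : Prop :=
  ∀ x : 𝒲, ∃! a : ℕ → ℝ,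
    Tendsto (fun N => ∑ i ∈ Finset.range N, a i • e i) atTop (𝓝 x)

/-- `x` is a linear combination of the vectors `b i`, `i ∈ s`. -/
def SuppIn (b : ℕ → 𝒲) (x : 𝒲) (s : Finset ℕ) : Prop :=
  ∃ a : ℕ → ℝ, x = ∑ i ∈ s, a i • b i

/-- `(x i)_{i<k} ∼_K (y i)_{i<k}`. -/
def SeqEquiv (K : ℝ) (k : ℕ) (x y : ℕ → 𝒲) : Prop :=
  ∀ a : ℕ → ℝ,
    (1 / K) * ‖∑ i ∈ Finset.range k, a i • x i‖ ≤ ‖∑ i ∈ Finset.range k, a i • y i‖ ∧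
    ‖∑ i ∈ Finset.range k, a i • y i‖ ≤ K * ‖∑ i ∈ Finset.range k, a i • x i‖

/-- The outcome `l = (x 0, …, x k)` satisfies `(x 0, …, x k) ∼_K (y 0, …, y k)`. -/
def OutcomeEquiv (K : ℝ) (l : List 𝒲) (y : ℕ → 𝒲) : Prop :=
  SeqEquiv K l.length (fun i => l.getD i 0) y

/-- The outcome `l = (u 0, v 0, u 1, v 1, …, u k, v k)` satisfies
`(u 0, …, u k) ∼_K (v 0, …, v k)`. -/
def PairOutcomeEquiv (K : ℝ) (l : List 𝒲) : Prop :=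
  SeqEquiv K (l.length / 2) (fun i => l.getD (2 * i) 0) (fun i => l.getD (2 * i + 1) 0)

/-- The tree `T((x n), Y, K)`. -/
def embTree (x : ℕ → 𝒲) (Y : Set 𝒲) (K : ℝ) : Set (List 𝒲) :=
  {l | (∀ v ∈ l, v ∈ Y) ∧ SeqEquiv K l.length (fun i => l.getD i 0) x}

open Classical in
/-- The rank of a tree of finite sequences; `⊤ = ∞` if it is ill-founded. -/
noncomputable def treeRank (T : Set (List 𝒲)) : WithTop Ordinal :=
  if h : WellFounded (fun t s : T => s.val <+: t.val ∧ s.val ≠ t.val) then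
    ((⨆ s : T, Order.succ ((h.apply s).rank) : Ordinal) : WithTop Ordinal)
  else ⊤

open Classical in
/-- The embeddability index `Emb((x n), Y) = sup_{K ≥ 1} rank T((x n), Y, K)`. -/
noncomputable def embIndex (x : ℕ → 𝒲) (Y : Set 𝒲) : WithTop Ordinal :=
  if ∃ K : ℝ, 1 ≤ K ∧ treeRank (embTree x Y K) = ⊤ then ⊤
  else ((sSup {o : Ordinal | ∃ K : ℝ, 1 ≤ K ∧
      (o : WithTop Ordinal) = treeRank (embTree x Y K)} : Ordinal) : WithTop Ordinal)

/-- `(I m)` is a sequence of successive nonempty finite intervals `I 0 < I 1 < …` of `ℕ`. -/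
def IntervalSeq (I : ℕ → Finset ℕ) : Prop :=
  (∀ m, ∃ a b : ℕ, a ≤ b ∧ I m = Finset.Icc a b) ∧
  ∀ m, ∀ i ∈ I m, ∀ j ∈ I (m + 1), i < j

/-- The setting of Section 2 of the paper: a Banach space `𝒲` with a Schauder basis
`(e n)`, a countable subfield `𝔽 ⊆ ℝ` closed under the norms of finite `𝔽`-linear
combinations of the basis, and the countable `𝔽`-vector space `W` spanned by `(e n)`. -/
structure Frame (𝒲 : Type) [NormedAddCommGroup 𝒲] [NormedSpace ℝ 𝒲] : Type where
  e : ℕ → 𝒲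
  complete : CompleteSpace 𝒲
  basis : IsSchauderBasis e
  𝔽 : Subfield ℝ
  countable : (𝔽 : Set ℝ).Countable
  norm_mem : ∀ (s : Finset ℕ) (a : ℕ → ℝ), (∀ i ∈ s, a i ∈ 𝔽) →
    ‖∑ i ∈ s, a i • e i‖ ∈ 𝔽

namespace Frame

variable {𝒲 : Type} [NormedAddCommGroup 𝒲] [NormedSpace ℝ 𝒲] (ctx : Frame 𝒲)

/-- The `𝔽`-linear span of a set of vectors. -/
def fspan (S : Set 𝒲) : Set 𝒲 :=
  {v | ∃ t : Finset 𝒲, ↑t ⊆ S ∧ ∃ c : 𝒲 → ℝ, (∀ w, c w ∈ ctx.𝔽) ∧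
    v = ∑ w ∈ t, c w • w}

/-- The countable `𝔽`-vector space `W` with basis `(e n)`. -/
def W : Set 𝒲 := ctx.fspan (Set.range ctx.e)

/-- `(y n)` is a block sequence with respect to the reference block basis `(b n)`:
a sequence of nonzero vectors of the `𝔽`-span of `(b n)` with successive supports. -/
def BlockSeqRel (b y : ℕ → 𝒲) : Prop :=
  (∀ n, y n ∈ ctx.fspan (Set.range b)) ∧ (∀ n, y n ≠ 0) ∧
  ∃ D : ℕ → Finset ℕ, (∀ n, SuppIn b (y n) (D n)) ∧
    ∀ n, ∀ i ∈ D n, ∀ j ∈ D (n + 1), i < j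

/-- `(y n)` is a block sequence (with respect to the basis `(e n)` of `W`). -/
def IsBlockSeq (y : ℕ → 𝒲) : Prop := ctx.BlockSeqRel ctx.e y

/-- `Y` is a block subspace of `X`: the `𝔽`-span of an infinite block sequence of
vectors of `X`. -/
def IsBlockSubspaceOf (Y X : Set 𝒲) : Prop :=
  ∃ y : ℕ → 𝒲, ctx.IsBlockSeq y ∧ (∀ n, y n ∈ X) ∧ Y = ctx.fspan (Set.range y)

/-- `Y` is a block subspace of `W`. -/
def IsBlockSubspace (Y : Set 𝒲) : Prop := ctx.IsBlockSubspaceOf Y ctx.W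

/-- `F` is a finite-dimensional `𝔽`-subspace of `X`. -/
def IsFinDimIn (F X : Set 𝒲) : Prop :=
  ∃ t : Finset 𝒲, ↑t ⊆ X ∧ F = ctx.fspan ↑t

/-- `n < F`: every vector of `F` is supported on basis vectors of index `> n`. -/
def NatLt (n : ℕ) (F : Set 𝒲) : Prop :=
  ∀ x ∈ F, ∃ s : Finset ℕ, SuppIn ctx.e x s ∧ ∀ i ∈ s, n < i

/-- `V` is an `𝔽`-subspace of `𝒲`. -/
def IsSubspace (V : Set 𝒲) : Prop :=
  (0 : 𝒲) ∈ V ∧ (∀ u v : 𝒲, u ∈ V → v ∈ V → u + v ∈ V) ∧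
    ∀ c : ℝ, c ∈ ctx.𝔽 → ∀ v ∈ V, c • v ∈ V

/-- `V` is infinite-dimensional (not contained in a finitely generated subspace). -/
def IsInfDim (V : Set 𝒲) : Prop :=
  ¬∃ t : Finset 𝒲, V ⊆ ctx.fspan ↑t

/-- Game values of the asymptotic game `F^β_X`, for player II, computed by transfinite
recursion on the ordinal bound.  `IIWinsF X S β Facc vec` states: in the asymptotic game
below `X`, from a position where the vectors `vec` have been played and the
finite-dimensional subspaces played by II span `Facc`, and where I must now play a natural
number together with an ordinal `< β`, player II has a strategy so that the final outcome
lies in `S`. -/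
noncomputable def IIWinsF (X : Set 𝒲) (S : Set (List 𝒲)) :
    Ordinal → Set 𝒲 → List 𝒲 → Prop :=
  WellFounded.fix (C := fun _ : Ordinal => Set 𝒲 → List 𝒲 → Prop) Ordinal.lt_wf
    (fun β ih Facc vec =>
      ∀ n : ℕ, ∀ ξ : Ordinal, ∀ hξ : ξ < β,
        ∃ F : Set 𝒲, ctx.IsFinDimIn F X ∧ ctx.NatLt n F ∧
          ∃ x : 𝒲, x ≠ 0 ∧ x ∈ ctx.fspan (Facc ∪ F) ∧
            (ξ = 0 → vec ++ [x] ∈ S) ∧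
            (ξ ≠ 0 → ih ξ hξ (ctx.fspan (Facc ∪ F)) (vec ++ [x])))

/-- Player II has a strategy in the asymptotic game `F^β_X` to play an outcome in `S`. -/
noncomputable def IIStratF (X : Set 𝒲) (β : Ordinal) (S : Set (List 𝒲)) : Prop :=
  (β = 0 → ([] : List 𝒲) ∈ S) ∧ (β ≠ 0 → ctx.IIWinsF X S β (ctx.fspan ∅) [])

/-- Game values of the asymptotic game `F^β_X` for player I (who plays the integers and
the ordinals, trying to steer the outcome into `S`). -/
noncomputable def IWinsF (X : Set 𝒲) (S : Set (List 𝒲)) :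
    Ordinal → Set 𝒲 → List 𝒲 → Prop :=
  WellFounded.fix (C := fun _ : Ordinal => Set 𝒲 → List 𝒲 → Prop) Ordinal.lt_wf
    (fun β ih Facc vec =>
      ∃ n : ℕ, ∃ ξ : Ordinal, ∃ hξ : ξ < β,
        ∀ F : Set 𝒲, ctx.IsFinDimIn F X → ctx.NatLt n F →
        ∀ x : 𝒲, x ≠ 0 → x ∈ ctx.fspan (Facc ∪ F) →
          (ξ = 0 → vec ++ [x] ∈ S) ∧
          (ξ ≠ 0 → ih ξ hξ (ctx.fspan (Facc ∪ F)) (vec ++ [x])))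

/-- Player I has a strategy in the asymptotic game `F^β_X` to play an outcome in `S`. -/
noncomputable def IStratF (X : Set 𝒲) (β : Ordinal) (S : Set (List 𝒲)) : Prop :=
  (β = 0 → ([] : List 𝒲) ∈ S) ∧ (β ≠ 0 → ctx.IWinsF X S β (ctx.fspan ∅) [])

/-- Game values of the Gowers game `G^α_X` for player II. -/
noncomputable def IIWinsG (X : Set 𝒲) (S : Set (List 𝒲)) :
    Ordinal → Set 𝒲 → List 𝒲 → Prop :=
  WellFounded.fix (C := fun _ : Ordinal => Set 𝒲 → List 𝒲 → Prop) Ordinal.lt_wf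
    (fun α ih Facc vec =>
      ∀ Y : Set 𝒲, ctx.IsBlockSubspaceOf Y X →
      ∀ ξ : Ordinal, ∀ hξ : ξ < α,
        ∃ F : Set 𝒲, ctx.IsFinDimIn F Y ∧
          ∃ x : 𝒲, x ≠ 0 ∧ x ∈ ctx.fspan (Facc ∪ F) ∧
            (ξ = 0 → vec ++ [x] ∈ S) ∧
            (ξ ≠ 0 → ih ξ hξ (ctx.fspan (Facc ∪ F)) (vec ++ [x])))

/-- Player II has a strategy in the generalised Gowers game `G^α_X` to play in `S`. -/
noncomputable def IIStratG (X : Set 𝒲) (α : Ordinal) (S : Set (List 𝒲)) : Prop :=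
  (α = 0 → ([] : List 𝒲) ∈ S) ∧ (α ≠ 0 → ctx.IIWinsG X S α (ctx.fspan ∅) [])

/-- Game values of the adversarial game `A^α_X` for player II (who plays the integers,
the finite-dimensional subspaces `F_l ⊆ Y_l` and the vectors `y_l`). -/
noncomputable def IIWinsA (X : Set 𝒲) (S : Set (List 𝒲)) :
    Ordinal → Set 𝒲 → Set 𝒲 → List 𝒲 → Prop :=
  WellFounded.fix (C := fun _ : Ordinal => Set 𝒲 → Set 𝒲 → List 𝒲 → Prop)
    Ordinal.lt_wf
    (fun α ih Eacc Facc vec =>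
      ∃ n : ℕ,
        ∀ E : Set 𝒲, ctx.IsFinDimIn E X → ctx.NatLt n E →
        ∀ x : 𝒲, x ≠ 0 → x ∈ ctx.fspan (Eacc ∪ E) →
        ∀ Y : Set 𝒲, ctx.IsBlockSubspaceOf Y X →
        ∀ ξ : Ordinal, ∀ hξ : ξ < α,
          ∃ F : Set 𝒲, ctx.IsFinDimIn F Y ∧
            ∃ y : 𝒲, y ≠ 0 ∧ y ∈ ctx.fspan (Facc ∪ F) ∧
              (ξ = 0 → vec ++ [x, y] ∈ S) ∧
              (ξ ≠ 0 → ih ξ hξ (ctx.fspan (Eacc ∪ E)) (ctx.fspan (Facc ∪ F))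
                (vec ++ [x, y])))

/-- Player II has a strategy in the adversarial game `A^α_X` to play in `S`. -/
noncomputable def IIStratA (X : Set 𝒲) (α : Ordinal) (S : Set (List 𝒲)) : Prop :=
  (α = 0 → ([] : List 𝒲) ∈ S) ∧
  (α ≠ 0 → ctx.IIWinsA X S α (ctx.fspan ∅) (ctx.fspan ∅) [])

/-- Game values of the adversarial game `B^α_X` for player I (who plays the
finite-dimensional subspaces `E_l ⊆ Y_l`, the vectors `x_l`, the integers and the
ordinals). -/
noncomputable def IWinsB (X : Set 𝒲) (S : Set (List 𝒲)) :
    Ordinal → Set 𝒲 → Set 𝒲 → List 𝒲 → Prop :=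
  WellFounded.fix (C := fun _ : Ordinal => Set 𝒲 → Set 𝒲 → List 𝒲 → Prop)
    Ordinal.lt_wf
    (fun α ih Eacc Facc vec =>
      ∀ Y : Set 𝒲, ctx.IsBlockSubspaceOf Y X →
        ∃ E : Set 𝒲, ctx.IsFinDimIn E Y ∧
          ∃ x : 𝒲, x ≠ 0 ∧ x ∈ ctx.fspan (Eacc ∪ E) ∧
            ∃ n : ℕ, ∃ ξ : Ordinal, ∃ hξ : ξ < α,
              ∀ F : Set 𝒲, ctx.IsFinDimIn F X → ctx.NatLt n F →
              ∀ y : 𝒲, y ≠ 0 → y ∈ ctx.fspan (Facc ∪ F) →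
                (ξ = 0 → vec ++ [x, y] ∈ S) ∧
                (ξ ≠ 0 → ih ξ hξ (ctx.fspan (Eacc ∪ E)) (ctx.fspan (Facc ∪ F))
                  (vec ++ [x, y])))

/-- Player I has a strategy in the adversarial game `B^α_X` to play in `S`. -/
noncomputable def IStratB (X : Set 𝒲) (α : Ordinal) (S : Set (List 𝒲)) : Prop :=
  (α = 0 → ([] : List 𝒲) ∈ S) ∧
  (α ≠ 0 → ctx.IWinsB X S α (ctx.fspan ∅) (ctx.fspan ∅) [])

/-- Game values of the adversarial game `B^α_X` for player II (who plays the block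
subspaces `Y_l`, the finite-dimensional subspaces `F_l` and the vectors `y_l`). -/
noncomputable def IIWinsB (X : Set 𝒲) (S : Set (List 𝒲)) :
    Ordinal → Set 𝒲 → Set 𝒲 → List 𝒲 → Prop :=
  WellFounded.fix (C := fun _ : Ordinal => Set 𝒲 → Set 𝒲 → List 𝒲 → Prop)
    Ordinal.lt_wf
    (fun α ih Eacc Facc vec =>
      ∃ Y : Set 𝒲, ctx.IsBlockSubspaceOf Y X ∧
        ∀ E : Set 𝒲, ctx.IsFinDimIn E Y →
        ∀ x : 𝒲, x ≠ 0 → x ∈ ctx.fspan (Eacc ∪ E) →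
        ∀ n : ℕ, ∀ ξ : Ordinal, ∀ hξ : ξ < α,
          ∃ F : Set 𝒲, ctx.IsFinDimIn F X ∧ ctx.NatLt n F ∧
            ∃ y : 𝒲, y ≠ 0 ∧ y ∈ ctx.fspan (Facc ∪ F) ∧
              (ξ = 0 → vec ++ [x, y] ∈ S) ∧
              (ξ ≠ 0 → ih ξ hξ (ctx.fspan (Eacc ∪ E)) (ctx.fspan (Facc ∪ F))
                (vec ++ [x, y])))

/-- Player II has a strategy in the adversarial game `B^α_X` to play in `S`. -/
noncomputable def IIStratB (X : Set 𝒲) (α : Ordinal) (S : Set (List 𝒲)) : Prop :=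
  (α = 0 → ([] : List 𝒲) ∈ S) ∧
  (α ≠ 0 → ctx.IIWinsB X S α (ctx.fspan ∅) (ctx.fspan ∅) [])

end Frame

end Rosendal

/-!
Let I play the same block subspace `Y` in every round. Then II's moves stay in `Y`, and a position
with ordinal bound `ξ` which is winning for II is a node of the tree of rank at least `ξ`: whatever
`η < ξ` I plays next, II answers with an extension that is winning with bound `η`. That a winning
position is itself a node, although only final outcomes are required to lie in the target, is seen
by letting I play `0` at once and using closure under initial segments.
-/

namespace Rosendal

section Rank

theorem le_rank_of_forall_lt_exists_rel {σ : Type*} {r : σ → σ → Prop} (hr : WellFounded r)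
    {P : Ordinal → σ → Prop} (hP : ∀ β s, P β s → ∀ ξ < β, ∃ t, r t s ∧ P ξ t)
    {β : Ordinal} {s : σ} (hs : P β s) : β ≤ (hr.apply s).rank := by
  induction s using hr.induction generalizing β with
  | h s ih =>
    refine le_of_forall_lt fun ξ hξ => ?_
    obtain ⟨t, hts, ht⟩ := hP β s hs ξ hξ
    exact (ih t hts ht).trans_lt ((hr.apply s).rank_lt_of_rel hts)

theorem lt_treeRank_of_forall_lt_exists_extension {𝒲 : Type} {T : Set (List 𝒲)}
    {P : Ordinal → List 𝒲 → Prop} (mem : ∀ β l, P β l → l ∈ T)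
    (extend : ∀ β l, P β l → ∀ ξ < β, ∃ l', l <+: l' ∧ l ≠ l' ∧ P ξ l')
    {β : Ordinal} {l : List 𝒲} (hl : P β l) : (β : WithTop Ordinal) < treeRank T := by
  unfold treeRank
  split_ifs with hwf
  · have hle : β ≤ (hwf.apply ⟨l, mem β l hl⟩).rank := by
      refine le_rank_of_forall_lt_exists_rel hwf (P := fun γ s => P γ s.val) ?_ hl
      intro γ s hs ξ hξ
      obtain ⟨l', hpre, hne, hl'⟩ := extend γ s.val hs ξ hξ
      exact ⟨⟨l', mem ξ l' hl'⟩, ⟨hpre, hne⟩, hl'⟩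
    rw [WithTop.coe_lt_coe]
    exact (Order.lt_succ_of_le hle).trans_le
      (Ordinal.le_iSup (fun s : T => Order.succ (hwf.apply s).rank) ⟨l, mem β l hl⟩)
  · exact WithTop.coe_lt_top β

end Rank

section SeqEquiv

variable {𝒲 : Type} [NormedAddCommGroup 𝒲] [NormedSpace ℝ 𝒲] {K : ℝ} {k m : ℕ} {x x' y : ℕ → 𝒲}

theorem SeqEquiv.mono (h : SeqEquiv K m x y) (hkm : k ≤ m) : SeqEquiv K k x y := by
  intro a
  have sum_truncate (u : ℕ → 𝒲) :
      ∑ i ∈ Finset.range m, (if i < k then a i else 0) • u i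
        = ∑ i ∈ Finset.range k, a i • u i := by
    refine (Finset.sum_subset_zero_on_sdiff (Finset.range_mono hkm) ?_ ?_).symm
    · intro i hi
      rw [if_neg (by simpa using (Finset.mem_sdiff.1 hi).2), zero_smul]
    · intro i hi
      rw [if_pos (Finset.mem_range.1 hi)]
  simpa only [sum_truncate] using h fun i => if i < k then a i else 0

theorem SeqEquiv.congr_left (h : SeqEquiv K k x y) (hx : ∀ i < k, x i = x' i) :
    SeqEquiv K k x' y := by
  intro a
  have hsum : ∑ i ∈ Finset.range k, a i • x i = ∑ i ∈ Finset.range k, a i • x' i :=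
    Finset.sum_congr rfl fun i hi => by rw [hx i (Finset.mem_range.1 hi)]
  simpa only [hsum] using h a

theorem setOf_outcomeEquiv_mem_tree (K : ℝ) (y : ℕ → 𝒲) :
    {l | OutcomeEquiv K l y} ∈ Descriptive.tree 𝒲 := by
  intro l v (h : SeqEquiv K _ _ y)
  exact (h.mono (by simp)).congr_left fun i hi => List.getD_append l [v] 0 i hi

end SeqEquiv

namespace Frame

variable {𝒲 : Type} [NormedAddCommGroup 𝒲] [NormedSpace ℝ 𝒲] {ctx : Frame 𝒲}
  {X Y A : Set 𝒲} {S : Set (List 𝒲)} {α : Ordinal} {vec : List 𝒲}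

variable (ctx) in
theorem fspan_eq_coe_span (A : Set 𝒲) : ctx.fspan A = (Submodule.span ctx.𝔽 A : Set 𝒲) := by
  ext v
  constructor
  · rintro ⟨t, ht, c, hc, rfl⟩
    exact Submodule.sum_mem _ fun w hw =>
      Submodule.smul_mem _ (⟨c w, hc w⟩ : ctx.𝔽) (Submodule.subset_span (ht hw))
  · intro hv
    obtain ⟨c, t, ht, -, rfl⟩ := Submodule.mem_span_iff_exists_finset_subset.1 hv
    exact ⟨t, ht, fun w => c w, fun w => (c w).2, rfl⟩

theorem IsBlockSubspaceOf.fspan_subset (hY : ctx.IsBlockSubspaceOf Y X) (hA : A ⊆ Y) :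
    ctx.fspan A ⊆ Y := by
  obtain ⟨y, -, -, rfl⟩ := hY
  simp only [fspan_eq_coe_span] at hA ⊢
  exact Submodule.span_le.2 hA

theorem IsFinDimIn.subset {F : Set 𝒲} (hF : ctx.IsFinDimIn F Y)
    (hY : ctx.IsBlockSubspaceOf Y X) : F ⊆ Y := by
  obtain ⟨t, ht, rfl⟩ := hF
  exact hY.fspan_subset ht

variable (ctx) in
/-- Player II wins the Gowers game below `X` from the position with ordinal bound `α` in which the
vectors `vec` have been played and II's finite-dimensional subspaces span `Facc`. The bound `0`
marks the end of the game, where `IIWinsG` would hold vacuously and `vec ∈ S` is asked instead. -/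
def IIWinsGAt (X : Set 𝒲) (S : Set (List 𝒲)) (α : Ordinal) (Facc : Set 𝒲) (vec : List 𝒲) : Prop :=
  (α = 0 → vec ∈ S) ∧ (α ≠ 0 → ctx.IIWinsG X S α Facc vec)

theorem IIWinsGAt.exists_move (h : ctx.IIWinsGAt X S α A vec) (hY : ctx.IsBlockSubspaceOf Y X)
    {ξ : Ordinal} (hξ : ξ < α) :
    ∃ F, ctx.IsFinDimIn F Y ∧ ∃ v ∈ ctx.fspan (A ∪ F),
      ctx.IIWinsGAt X S ξ (ctx.fspan (A ∪ F)) (vec ++ [v]) := by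
  have hwins := h.2 hξ.ne_bot
  rw [IIWinsG, WellFounded.fix_eq] at hwins
  obtain ⟨F, hF, v, -, hv, hnext⟩ := hwins Y hY ξ hξ
  exact ⟨F, hF, v, hv, hnext⟩

theorem IIWinsGAt.mem (h : ctx.IIWinsGAt X S α A vec) (hY : ctx.IsBlockSubspaceOf Y X)
    (hS : S ∈ Descriptive.tree 𝒲) : vec ∈ S := by
  rcases eq_or_ne α 0 with hα | hα
  · exact h.1 hα
  · obtain ⟨_, -, _, -, hnext⟩ := h.exists_move hY (pos_iff_ne_zero.2 hα)
    exact hS (hnext.1 rfl)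

variable (ctx) in
/-- II wins from a position of the Gowers game below `X` with ordinal bound `α`, vectors `vec` and
accumulated space contained in `Y`; these are the positions that arise when I always plays `Y`. -/
def IIWinsGWithin (X : Set 𝒲) (S : Set (List 𝒲)) (Y : Set 𝒲) (α : Ordinal) (vec : List 𝒲) : Prop :=
  (∀ v ∈ vec, v ∈ Y) ∧ ∃ Facc ⊆ Y, ctx.IIWinsGAt X S α Facc vec

theorem IIWinsGWithin.exists_extension (h : ctx.IIWinsGWithin X S Y α vec)
    (hY : ctx.IsBlockSubspaceOf Y X) {ξ : Ordinal} (hξ : ξ < α) :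
    ∃ v, ctx.IIWinsGWithin X S Y ξ (vec ++ [v]) := by
  obtain ⟨hvec, A, hA, hwins⟩ := h
  obtain ⟨F, hF, v, hv, hnext⟩ := hwins.exists_move hY hξ
  have hspan : ctx.fspan (A ∪ F) ⊆ Y := hY.fspan_subset (Set.union_subset hA (hF.subset hY))
  refine ⟨v, ?_, ctx.fspan (A ∪ F), hspan, hnext⟩
  rw [List.forall_mem_append, List.forall_mem_singleton]
  exact ⟨hvec, hspan hv⟩

theorem IIStratG.iiWinsGWithin (h : ctx.IIStratG X α S) (hY : ctx.IsBlockSubspaceOf Y X) :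
    ctx.IIWinsGWithin X S Y α [] :=
  ⟨List.forall_mem_nil _, ctx.fspan ∅, hY.fspan_subset (Set.empty_subset Y), h⟩

end Frame

theorem rank_from_gowers_strategy_general
    {𝒲 : Type} [NormedAddCommGroup 𝒲] [NormedSpace ℝ 𝒲] {ctx : Frame 𝒲}
    {X Y : Set 𝒲} {S : Set (List 𝒲)} (hS : S ∈ Descriptive.tree 𝒲)
    {α : Ordinal} (h : ctx.IIStratG X α S) (hY : ctx.IsBlockSubspaceOf Y X) :
    (α : WithTop Ordinal) < treeRank {l | (∀ v ∈ l, v ∈ Y) ∧ l ∈ S} := by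
  refine lt_treeRank_of_forall_lt_exists_extension (P := ctx.IIWinsGWithin X S Y) ?_ ?_
    (h.iiWinsGWithin hY)
  · rintro β l ⟨hl, _, -, hwins⟩
    exact ⟨hl, hwins.mem hY hS⟩
  · intro β l hl ξ hξ
    obtain ⟨v, hv⟩ := hl.exists_extension hY hξ
    exact ⟨l ++ [v], List.prefix_append l [v], by simp, hv⟩

/-- If II has a strategy in `G^α_X` to play outcomes `K`-equivalent to
the block sequence `(z n)`, then for every block subspace `Y ⊆ X`,
`rank T((z n), Y, K) > α`. -/
theorem rank_from_gowers_strategy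
    (𝒲 : Type) [NormedAddCommGroup 𝒲] [NormedSpace ℝ 𝒲] (ctx : Frame 𝒲)
    (α : Ordinal) (hα : α < (Cardinal.aleph 1).ord) (K : ℝ) (hK : 1 ≤ K)
    (X : Set 𝒲) (hX : ctx.IsBlockSubspace X)
    (z : ℕ → 𝒲) (hz : ctx.IsBlockSeq z)
    (h : ctx.IIStratG X α {l | OutcomeEquiv K l z}) :
    ∀ Y : Set 𝒲, ctx.IsBlockSubspaceOf Y X →
      (α : WithTop Ordinal) < treeRank (embTree z Y K) :=
  fun _ hY => rank_from_gowers_strategy_general (setOf_outcomeEquiv_mem_tree K z) h hY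

end Rosendal
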